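/- Let G be the bipartite graph of a finite poset (V, ≺) (classes V⁻, V⁺; edge (v⁻,u⁺) iff v ≺ u). If M is a maximum matching in G of size m, then the maximum antichain in (V, ≺) has size exactly |V| − m. -/

import Mathlib

/-- A matching in the bipartite comparability graph of a poset: a set of pairs
(v,u) with v < u, injective in each coordinate. -/
def IsPosetMatching {V : Type*} [PartialOrder V] (M : Finset (V × V)) : Prop :=
  (∀ p ∈ M, p.1 < p.2) ∧
  (∀ v u u', (v, u) ∈ M → (v, u') ∈ M → u = u') ∧
  (∀ v v' u, (v, u) ∈ M → (v', u) ∈ M → v = v')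

/-!
An antichain `A` yields a vertex cover of the bipartite graph with `|V| - |A|` vertices: take `v⁻`
for `v` outside the upper closure of `A`, and `u⁺` for `u` strictly above an element of `A`. Hence
`|A| + |M| ≤ |V|` for every matching `M`. For equality, let `S` maximize the deficiency
`|S| - |N(S)|`, where `N(S)` is the set of elements strictly above some element of `S`. By the
defect form of Hall's theorem some matching misses at most `|S| - |N(S)|` vertices of `V⁻`, while
`S \ N(S)` is an antichain with at least that many elements.
-/

section

open Finset Function

theorem exists_injective_subtype_of_card_le_card_biUnion_add {ι α : Type*} [DecidableEq α]
    (t : ι → Finset α) (d : ℕ) (ht : ∀ S : Finset ι, #S ≤ #(S.biUnion t) + d) :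
    ∃ E : Finset ι, #E ≤ d ∧ ∃ f : {i // i ∉ E} → α,
      Injective f ∧ ∀ i : {i // i ∉ E}, f i ∈ t i := by
  -- Hall's theorem applies after adjoining `d` new elements to every `t i`;
  -- `E` collects the indices that are matched to new elements.
  have hall (S : Finset ι) :
      #S ≤ #(S.biUnion fun i ↦ (t i).disjSum (univ : Finset (Fin d))) := by
    rcases S.eq_empty_or_nonempty with rfl | ⟨i, hi⟩
    · simp
    have hsub : (S.biUnion t).disjSum (univ : Finset (Fin d)) ⊆
        S.biUnion fun i ↦ (t i).disjSum univ := by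
      rintro (a | k) hx
      · simpa using hx
      · exact mem_biUnion.2 ⟨i, hi, by simp⟩
    calc #S ≤ #(S.biUnion t) + d := ht S
      _ = #((S.biUnion t).disjSum (univ : Finset (Fin d))) := by simp
      _ ≤ _ := card_le_card hsub
  obtain ⟨f, hf, hft⟩ := (all_card_le_biUnion_card_iff_exists_injective _).1 hall
  let E : Finset ι := (univ.map (Embedding.inr : Fin d ↪ α ⊕ Fin d)).preimage f hf.injOn
  have hE : #E ≤ d := by
    calc #E ≤ #(univ.map (Embedding.inr : Fin d ↪ α ⊕ Fin d)) :=
          card_le_card_of_injOn f (fun i hi ↦ mem_preimage.1 hi) hf.injOn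
      _ = d := by simp
  have hold (i : {i // i ∉ E}) : ∃ a, f i = Sum.inl a := by
    rcases h : f i with a | k
    · exact ⟨a, rfl⟩
    · exact absurd (mem_preimage.2 (by simp [h])) i.2
  choose g hg using hold
  refine ⟨E, hE, g, fun i j hij ↦ Subtype.ext (hf ?_), fun i ↦ ?_⟩
  · rw [hg i, hg j, hij]
  · simpa only [hg i, inl_mem_disjSum] using hft i

theorem isAntichain_diff_setOf_exists_rel {α : Type*} (r : α → α → Prop) (s : Set α) :
    IsAntichain r (s \ {b | ∃ a ∈ s, r a b}) :=
  fun a ha _ hb _ hab ↦ hb.2 ⟨a, ha.1, hab⟩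

variable {V : Type*} [PartialOrder V]

theorem exists_isPosetMatching_card_eq {ι : Type*} [Fintype ι] {f g : ι → V}
    (hf : Injective f) (hg : Injective g) (hfg : ∀ i, f i < g i) :
    ∃ M : Finset (V × V), IsPosetMatching M ∧ #M = Fintype.card ι := by
  have hinj : Injective fun i ↦ (f i, g i) := fun i j h ↦ hf (congrArg Prod.fst h)
  refine ⟨univ.map ⟨_, hinj⟩, ⟨?_, ?_, ?_⟩, card_map _⟩
  · simpa using hfg
  · intro v u u' hu hu'
    obtain ⟨i, -, hi⟩ := mem_map.1 hu
    obtain ⟨j, -, hj⟩ := mem_map.1 hu'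
    obtain ⟨rfl, rfl⟩ := Prod.mk.inj hi
    obtain ⟨hji, rfl⟩ := Prod.mk.inj hj
    rw [hf hji]
  · intro v v' u hv hv'
    obtain ⟨i, -, hi⟩ := mem_map.1 hv
    obtain ⟨j, -, hj⟩ := mem_map.1 hv'
    obtain ⟨rfl, rfl⟩ := Prod.mk.inj hi
    obtain ⟨rfl, hji⟩ := Prod.mk.inj hj
    rw [hg hji]

variable [Fintype V]

theorem IsPosetMatching.card_add_card_le {M : Finset (V × V)} (hM : IsPosetMatching M)
    {A : Finset V} (hA : IsAntichain (· < ·) (A : Set V)) : #A + #M ≤ Fintype.card V := by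
  classical
  obtain ⟨hlt, hright, hleft⟩ := hM
  let U : UpperSet V := upperClosure (A : Set V)
  let cover (p : V × V) : V := if p.1 ∈ U then p.2 else p.1
  have cover_notMem : ∀ p ∈ M, cover p ∉ A := by
    intro p hp hpA
    by_cases hpU : p.1 ∈ U
    · simp only [cover, if_pos hpU] at hpA
      obtain ⟨a, ha, hap⟩ := mem_upperClosure.1 hpU
      have hap2 := hap.trans_lt (hlt p hp)
      exact hA ha hpA hap2.ne hap2
    · simp only [cover, if_neg hpU] at hpA
      exact hpU (subset_upperClosure hpA)
  have cover_injOn : Set.InjOn cover M := by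
    have snd_mem {p : V × V} (hp : p ∈ M) (hpU : p.1 ∈ U) : p.2 ∈ U :=
      U.upper (hlt p hp).le hpU
    rintro ⟨v, u⟩ hp ⟨v', u'⟩ hq (heq : (if v ∈ U then u else v) = if v' ∈ U then u' else v')
    split_ifs at heq with hv hv' hv'
    · subst heq
      rw [hleft v v' u hp hq]
    · exact absurd (heq ▸ snd_mem hp hv) hv'
    · exact absurd (heq ▸ snd_mem hq hv') hv
    · subst heq
      rw [hright v u u' hp hq]
  have hcard : #M ≤ #Aᶜ :=
    card_le_card_of_injOn cover (fun p hp ↦ by simpa using cover_notMem p hp) cover_injOn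
  calc #A + #M ≤ #A + #Aᶜ := Nat.add_le_add_left hcard _
    _ = Fintype.card V := card_add_card_compl A

variable (V) in
theorem exists_isPosetMatching_isAntichain_card_add_card_eq :
    ∃ (M : Finset (V × V)) (A : Finset V), IsPosetMatching M ∧
      IsAntichain (· < ·) (A : Set V) ∧ #A + #M = Fintype.card V := by
  classical
  let above (v : V) : Finset V := {u | v < u}
  let N (S : Finset V) : Finset V := S.biUnion above
  obtain ⟨S, -, hS⟩ := exists_max_image univ (fun S ↦ #S - #(N S)) univ_nonempty
  obtain ⟨E, hE, f, hf, hlt⟩ := exists_injective_subtype_of_card_le_card_biUnion_add above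
    (#S - #(N S)) fun T ↦ tsub_le_iff_left.1 (hS T (mem_univ T))
  obtain ⟨M, hM, hMcard⟩ := exists_isPosetMatching_card_eq Subtype.val_injective hf
    fun v ↦ (mem_filter.1 (hlt v)).2
  have hA : IsAntichain (· < ·) ((S \ N S : Finset V) : Set V) := by
    convert isAntichain_diff_setOf_exists_rel (· < ·) (S : Set V)
    ext u
    simp [N, above]
  refine ⟨M, S \ N S, hM, hA, (hM.card_add_card_le hA).antisymm ?_⟩
  calc Fintype.card V = #E + Fintype.card {v // v ∉ E} := by
        rw [Fintype.card_subtype, filter_notMem_eq_sdiff, ← compl_eq_univ_sdiff,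
          card_add_card_compl]
    _ ≤ #(S \ N S) + #M := add_le_add (hE.trans (le_card_sdiff _ _)) hMcard.ge

end

/-- If the maximum matching in the comparability bipartite graph of a finite poset
has size m, then the maximum antichain has size exactly |V| - m. -/
theorem max_antichain_eq_card_sub_matching (V : Type*) [Fintype V] [PartialOrder V]
    (m : ℕ)
    (hm : IsGreatest {k : ℕ | ∃ M : Finset (V × V), IsPosetMatching M ∧ M.card = k} m) :
    IsGreatest {k : ℕ | ∃ A : Finset V,
        IsAntichain (· < ·) (A : Set V) ∧ A.card = k}
      (Fintype.card V - m) := by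
  obtain ⟨⟨M, hM, rfl⟩, hmax⟩ := hm
  constructor
  · obtain ⟨M₀, A, hM₀, hA, hcard⟩ := exists_isPosetMatching_isAntichain_card_add_card_eq V
    have hM₀_le : M₀.card ≤ M.card := hmax ⟨M₀, hM₀, rfl⟩
    have hA_le : A.card + M.card ≤ Fintype.card V := hM.card_add_card_le hA
    exact ⟨A, hA, by lia⟩
  · rintro _ ⟨A, hA, rfl⟩
    exact Nat.le_sub_of_add_le (hM.card_add_card_le hA)
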